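/- Let K be a field of characteristic 0 containing a primitive p^n-th root of unity. Then the kernel of the multiplication-by-p map on the Milnor K-group K_q^M(K), which equals {ζ_p} · K_{q-1}^M(K) for ζ_p a primitive p-th root of unity, is contained in p^{n-1} K_q^M(K). Consequently, if x ∈ K_q^M(K) satisfies p x ∈ p^n K_q^M(K), then x ∈ p^{n-1} K_q^M(K). -/

import Mathlib

set_option autoImplicit false

/-! Milnor K-theory: generators and relations. -/

/-- The subgroup of relations (multilinearity and Steinberg) defining the `q`-th
Milnor K-group of a field `K`. -/
def MilnorKRel (K : Type*) [Field K] (q : ℕ) :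
    AddSubgroup (FreeAbelianGroup (Fin q → Kˣ)) :=
  AddSubgroup.closure
    ({x | ∃ (f : Fin q → Kˣ) (i : Fin q) (a b : Kˣ),
        x = FreeAbelianGroup.of (Function.update f i (a * b))
          - FreeAbelianGroup.of (Function.update f i a)
          - FreeAbelianGroup.of (Function.update f i b)} ∪
     {x | ∃ (f : Fin q → Kˣ) (i j : Fin q), i ≠ j ∧ (f i : K) + (f j : K) = 1 ∧
        x = FreeAbelianGroup.of f})

/-- The `q`-th Milnor K-group `K_q^M(K)` of a field `K`. -/
def MilnorK (K : Type*) [Field K] (q : ℕ) : Type _ :=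
  FreeAbelianGroup (Fin q → Kˣ) ⧸ MilnorKRel K q

instance (K : Type*) [Field K] (q : ℕ) : AddCommGroup (MilnorK K q) :=
  QuotientAddGroup.Quotient.addCommGroup _

/-- The Milnor symbol `{f 0, …, f (q-1)}` in `K_q^M(K)`. -/
def MilnorK.symbol (K : Type*) [Field K] (q : ℕ) (f : Fin q → Kˣ) : MilnorK K q :=
  QuotientAddGroup.mk (FreeAbelianGroup.of f)


/-- The subgroup `c·A` of an additive group `A`. -/
def pPowSub (A : Type*) [AddCommGroup A] (c : ℕ) : AddSubgroup A :=
  AddSubgroup.closure {x | ∃ y : A, x = c • y}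

namespace MilnorK

variable {K : Type*} [Field K] {q : ℕ}

theorem symbol_update_mul (f : Fin q → Kˣ) (i : Fin q) (a b : Kˣ) :
    symbol K q (Function.update f i (a * b)) =
      symbol K q (Function.update f i a) + symbol K q (Function.update f i b) := by
  have h : QuotientAddGroup.mk' (MilnorKRel K q)
      (FreeAbelianGroup.of (Function.update f i (a * b))
        - FreeAbelianGroup.of (Function.update f i a)
        - FreeAbelianGroup.of (Function.update f i b)) = 0 :=
    (QuotientAddGroup.eq_zero_iff _).2
      (AddSubgroup.subset_closure (Or.inl ⟨f, i, a, b, rfl⟩))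
  rw [map_sub, map_sub, sub_sub, sub_eq_zero] at h
  exact h

/-- The symbol as a homomorphism in its `i`-th entry. -/
def symbolHom (f : Fin q → Kˣ) (i : Fin q) : Additive Kˣ →+ MilnorK K q :=
  AddMonoidHom.mk' (fun a => symbol K q (Function.update f i a.toMul))
    fun a b => symbol_update_mul f i a.toMul b.toMul

theorem symbol_cons_pow (f : Fin q → Kˣ) (a : Kˣ) (m : ℕ) :
    symbol K (q + 1) (Fin.cons (a ^ m) f : Fin (q + 1) → Kˣ) =
      m • symbol K (q + 1) (Fin.cons a f : Fin (q + 1) → Kˣ) := by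
  simpa [symbolHom] using
    map_nsmul (symbolHom (Fin.cons a f : Fin (q + 1) → Kˣ) 0) m (Additive.ofMul a)

theorem map_mem_of_symbol {A : Type*} [AddCommGroup A] (φ : MilnorK K q →+ A)
    (S : AddSubgroup A) (h : ∀ f, φ (symbol K q f) ∈ S) (x : MilnorK K q) : φ x ∈ S := by
  obtain ⟨y, rfl⟩ := QuotientAddGroup.mk'_surjective (MilnorKRel K q) x
  induction y using FreeAbelianGroup.induction_on with
  | zero => rw [map_zero]; exact (map_zero φ).symm ▸ S.zero_mem
  | of f => exact h f
  | neg f hf => rw [map_neg]; exact (map_neg φ _).symm ▸ S.neg_mem hf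
  | add y z hy hz => rw [map_add]; exact (map_add φ _ _).symm ▸ S.add_mem hy hz

end MilnorK

theorem mem_pPowSub {A : Type*} [AddCommGroup A] {c : ℕ} {x : A} :
    x ∈ pPowSub A c ↔ ∃ y : A, x = c • y := by
  refine ⟨fun hx => ?_, fun hx => AddSubgroup.subset_closure hx⟩
  induction hx using AddSubgroup.closure_induction with
  | mem x hx => exact hx
  | zero => exact ⟨0, (smul_zero c).symm⟩
  | add x y _ _ hx hy =>
    obtain ⟨a, rfl⟩ := hx
    obtain ⟨b, rfl⟩ := hy
    exact ⟨a + b, (smul_add c a b).symm⟩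
  | neg x _ hx =>
    obtain ⟨a, rfl⟩ := hx
    exact ⟨-a, (smul_neg c a).symm⟩

/-- Let `K` be a field of characteristic `0` containing a primitive `p^n`-th root of
unity.  The kernel of multiplication by `p` on `K_q^M(K)` (here `q = r + 1`), which by
Suslin's theorem equals `{ζ_p}·K_{q-1}^M(K)` for `ζ_p` a primitive `p`-th root of unity
(assumed as the hypothesis `hker`, with the product with `ζ_p` the additive map `Pζp`
determined on symbols by `hPζp`), is contained in `p^{n-1} K_q^M(K)`; consequently, if
`p·x ∈ p^n K_q^M(K)` then `x ∈ p^{n-1} K_q^M(K)`. -/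
theorem milnor_ker_p_le_pow
    (K : Type*) [Field K] [CharZero K] (p n r : ℕ) [Fact p.Prime] (hn : 1 ≤ n)
    (ζ : Kˣ) (hζ : IsPrimitiveRoot ζ (p ^ n))
    (ζp : Kˣ) (hζp : IsPrimitiveRoot ζp p)
    (Pζp : MilnorK K r →+ MilnorK K (r + 1))
    (hPζp : ∀ f : Fin r → Kˣ,
      Pζp (MilnorK.symbol K r f) = MilnorK.symbol K (r + 1) (Fin.cons ζp f))
    (hker : ∀ x : MilnorK K (r + 1), p • x = 0 ↔ x ∈ Pζp.range) :
    (∀ x : MilnorK K (r + 1), p • x = 0 → x ∈ pPowSub (MilnorK K (r + 1)) (p ^ (n - 1))) ∧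
    (∀ x : MilnorK K (r + 1), p • x ∈ pPowSub (MilnorK K (r + 1)) (p ^ n) →
      x ∈ pPowSub (MilnorK K (r + 1)) (p ^ (n - 1))) := by
  have hp : p ^ n = p ^ (n - 1) * p := by rw [← pow_succ, Nat.sub_add_cancel hn]
  have hpos : 0 < p := (Fact.out : p.Prime).pos
  have : NeZero p := ⟨hpos.ne'⟩
  have hroot : IsPrimitiveRoot (ζ ^ p ^ (n - 1)) p := hζ.pow (pow_pos hpos n) hp
  obtain ⟨k, -, hk⟩ := hroot.eq_pow_of_mem_rootsOfUnity
    ((mem_rootsOfUnity p ζp).2 hζp.pow_eq_one)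
  have ker_le : ∀ x : MilnorK K (r + 1), p • x = 0 →
      x ∈ pPowSub (MilnorK K (r + 1)) (p ^ (n - 1)) := by
    intro x hx
    obtain ⟨y, rfl⟩ := (hker x).1 hx
    refine MilnorK.map_mem_of_symbol Pζp _ (fun f => ?_) y
    rw [hPζp, ← hk, ← pow_mul, mul_comm, pow_mul, MilnorK.symbol_cons_pow]
    exact mem_pPowSub.2 ⟨_, rfl⟩
  refine ⟨ker_le, fun x hx => ?_⟩
  obtain ⟨y, hy⟩ := mem_pPowSub.1 hx
  have hxy := ker_le (x - p ^ (n - 1) • y) (by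
    rw [smul_sub, hy, smul_smul, hp, mul_comm, sub_self])
  simpa using add_mem hxy (mem_pPowSub.2 ⟨y, rfl⟩)
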